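/- arXiv:2006.04064 — 3 statements merged into one kernel-verified Lean document; each statement's English description precedes it below -/
import Mathlib

section
/- Let n, f, g be positive integers, let A be an n×n real matrix, Z an n×f real matrix, H an n×f real matrix, and W an f×g real matrix, and let J_n denote the n×n all-ones matrix. Then ∑_{i=1}^{f} (A ⊙ (J_n · diag(Z[:,i])))·H[:,i]·W[i,:] = A·(Z ⊙ H)·W, where diag(Z[:,i]) is the diagonal matrix with the i-th column of Z on its diagonal. Hence choosing the GDC channel masks as Z_i = J_n·diag(Z[:,i]) recovers the DropOut layer, so DropOut is a special case of GDC. -/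
open Matrix BigOperators

/-- The `i`-th column of a matrix, as an `n × 1` matrix. -/
def colM {n f : ℕ} (H : Matrix (Fin n) (Fin f) ℝ) (i : Fin f) :
    Matrix (Fin n) (Fin 1) ℝ := fun v _ => H v i

/-- The `i`-th row of a matrix, as a `1 × g` matrix. -/
def rowM {f g : ℕ} (W : Matrix (Fin f) (Fin g) ℝ) (i : Fin f) :
    Matrix (Fin 1) (Fin g) ℝ := fun _ j => W i j

/-- The `n × n` all-ones matrix. -/
def allOnes (n : ℕ) : Matrix (Fin n) (Fin n) ℝ := fun _ _ => 1

/-- Choosing the GDC channel masks as `Zᵢ = Jₙ ⬝ diag(Z[:,i])` recovers the DropOut layer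
`A ⬝ (Z ⊙ H) ⬝ W`, so DropOut is a special case of GDC. -/
theorem gdc_recovers_dropout (n f g : ℕ) (hn : 0 < n) (hf : 0 < f) (hg : 0 < g)
    (A : Matrix (Fin n) (Fin n) ℝ) (Z H : Matrix (Fin n) (Fin f) ℝ)
    (W : Matrix (Fin f) (Fin g) ℝ) :
    ∑ i : Fin f,
        (A ⊙ (allOnes n * Matrix.diagonal (fun v => Z v i))) * (colM H i * rowM W i)
      = A * (Z ⊙ H) * W := by
  ext u j
  simp only [Matrix.sum_apply, Matrix.mul_apply, Matrix.hadamard_apply, Matrix.diagonal_apply,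
    allOnes, colM, rowM, Fin.sum_univ_one, Finset.sum_mul, one_mul,
    Finset.sum_ite_eq', Finset.mem_univ, if_true]
  refine Finset.sum_congr rfl fun i _ => Finset.sum_congr rfl fun v _ => ?_
  ring
end

section
/- Let n, f, g be positive integers, let A be an n×n real matrix, z ∈ ℝ^n, H an n×f real matrix, and W an f×g real matrix, and let J_n denote the n×n all-ones matrix. Then A ⊙ (J_n · diag(z)) = A · diag(z), and consequently ∑_{i=1}^{f} (A ⊙ (J_n · diag(z)))·H[:,i]·W[i,:] = A · diag(z) · H · W. Hence choosing all GDC channel masks equal to J_n·diag(z) recovers the node-sampling (FastGCN) layer, so node sampling is a special case of GDC. -/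
open Matrix BigOperators

/-- Masking by `Jₙ ⬝ diag z` scales the columns by `z`. -/
theorem hadamard_allOnes_mul_diagonal {n : ℕ} (A : Matrix (Fin n) (Fin n) ℝ)
    (z : Fin n → ℝ) : A ⊙ (allOnes n * Matrix.diagonal z) = A * Matrix.diagonal z := by
  ext u v
  simp [Matrix.hadamard_apply, Matrix.mul_diagonal, allOnes]

/-- A matrix product is the sum of its column-times-row outer products. -/
theorem sum_colM_mul_rowM {n f g : ℕ} (H : Matrix (Fin n) (Fin f) ℝ)
    (W : Matrix (Fin f) (Fin g) ℝ) : ∑ i, colM H i * rowM W i = H * W := by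
  ext u v
  simp [Matrix.sum_apply, Matrix.mul_apply, colM, rowM]

/-- `A ⊙ (Jₙ ⬝ diag z) = A ⬝ diag z`, and consequently choosing all GDC channel masks
equal to `Jₙ ⬝ diag z` recovers the node-sampling (FastGCN) layer `A ⬝ diag z ⬝ H ⬝ W`,
so node sampling is a special case of GDC. -/
theorem gdc_recovers_node_sampling (n f g : ℕ) (hn : 0 < n) (hf : 0 < f) (hg : 0 < g)
    (A : Matrix (Fin n) (Fin n) ℝ) (z : Fin n → ℝ) (H : Matrix (Fin n) (Fin f) ℝ)
    (W : Matrix (Fin f) (Fin g) ℝ) :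
    (A ⊙ (allOnes n * Matrix.diagonal z) = A * Matrix.diagonal z) ∧
    (∑ i : Fin f, (A ⊙ (allOnes n * Matrix.diagonal z)) * (colM H i * rowM W i)
      = A * Matrix.diagonal z * H * W) := by
  refine ⟨hadamard_allOnes_mul_diagonal A z, ?_⟩
  rw [hadamard_allOnes_mul_diagonal, ← Matrix.mul_sum, sum_colM_mul_rowM, Matrix.mul_assoc _ H W]
end

section
/- For all real a > 0 and b > 0, ∫₀¹ (log x)·a·b·x^{a−1}·(1 − x^a)^{b−1} dx = −(1/a)·(γ + ψ(b) + 1/b), where γ is the Euler–Mascheroni constant and ψ(b) denotes the digamma function, i.e., the derivative of log Γ at b. That is, the expectation of log π under the Kumaraswamy(a,b) distribution equals −(γ + ψ(b) + 1/b)/a. -/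
open Real

/-- The digamma function `ψ`, the derivative of `log ∘ Γ`. -/
noncomputable def digamma (x : ℝ) : ℝ := deriv (fun y => Real.log (Real.Gamma y)) x

open Set MeasureTheory in
/-- The real Beta integrand is integrable on the open unit interval. -/
theorem integrableOn_rpow_mul_one_sub_rpow {u v : ℝ} (hu : 0 < u) (hv : 0 < v) :
    IntegrableOn (fun x : ℝ => x ^ (u - 1) * (1 - x) ^ (v - 1)) (Ioo 0 1) := by
  have h := Complex.betaIntegral_convergent (u := u) (v := v) (by simpa) (by simpa)
  rw [intervalIntegrable_iff_integrableOn_Ioo_of_le zero_le_one] at h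
  refine IntegrableOn.congr_fun (Integrable.re h) (fun x hx => ?_) measurableSet_Ioo
  have hx' : (0 : ℝ) ≤ 1 - x := sub_nonneg.2 hx.2.le
  norm_cast
  rw [← Complex.ofReal_cpow hx.1.le, ← Complex.ofReal_cpow hx', ← Complex.ofReal_mul]
  exact Complex.ofReal_re _

open Set MeasureTheory in
/-- The real Beta integral in terms of the Gamma function. -/
theorem integral_rpow_mul_one_sub_rpow {u v : ℝ} (hu : 0 < u) (hv : 0 < v) :
    ∫ x in Ioo (0 : ℝ) 1, x ^ (u - 1) * (1 - x) ^ (v - 1) = Gamma u * Gamma v / Gamma (u + v) := by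
  have h := Complex.betaIntegral_eq_Gamma_mul_div u v (by simpa) (by simpa)
  rw [Complex.betaIntegral, intervalIntegral.integral_of_le zero_le_one,
    integral_Ioc_eq_integral_Ioo, ← Complex.ofReal_add, Complex.Gamma_ofReal, Complex.Gamma_ofReal,
    Complex.Gamma_ofReal] at h
  apply Complex.ofReal_injective
  rw [← integral_complex_ofReal]
  push_cast
  rw [← h]
  refine setIntegral_congr_fun measurableSet_Ioo fun x hx => ?_
  have hx' : (0 : ℝ) ≤ 1 - x := sub_nonneg.2 hx.2.le
  simp only [Complex.ofReal_cpow hx.1.le, Complex.ofReal_cpow hx']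
  push_cast
  rfl

/-- The Gamma function has derivative `Γ(x) ψ(x)` at every positive `x`. -/
theorem hasDerivAt_Gamma_digamma {x : ℝ} (hx : 0 < x) :
    HasDerivAt Gamma (Gamma x * digamma x) x := by
  have hd : DifferentiableAt ℝ Gamma x :=
    differentiableAt_Gamma fun m => ((neg_nonpos.2 m.cast_nonneg).trans_lt hx).ne'
  have hne := (Gamma_pos_of_pos hx).ne'
  have hψ : digamma x = deriv Gamma x / Gamma x := (hd.hasDerivAt.log hne).deriv
  rw [hψ, mul_div_cancel₀ _ hne]
  exact hd.hasDerivAt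

theorem digamma_one : digamma 1 = -eulerMascheroniConstant := by
  have h := (hasDerivAt_Gamma_digamma one_pos).unique hasDerivAt_Gamma_one
  simpa using h

theorem digamma_add_one {x : ℝ} (hx : 0 < x) : digamma (x + 1) = digamma x + 1 / x := by
  have hΓ := (Gamma_pos_of_pos hx).ne'
  have h₁ : HasDerivAt (fun y => Gamma (y + 1)) (Gamma (x + 1) * digamma (x + 1)) x :=
    (hasDerivAt_Gamma_digamma (by positivity : 0 < x + 1)).comp_add_const x 1
  have h₂ : HasDerivAt (fun y => Gamma (y + 1)) (1 * Gamma x + x * (Gamma x * digamma x)) x := by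
    refine ((hasDerivAt_id x).mul (hasDerivAt_Gamma_digamma hx)).congr_of_eventuallyEq ?_
    filter_upwards [eventually_ne_nhds hx.ne'] with y hy using Gamma_add_one hy
  have h := h₁.unique h₂
  rw [Gamma_add_one hx.ne'] at h
  field_simp
  apply mul_left_cancel₀ hΓ
  linear_combination h

open Set MeasureTheory in
/-- Differentiation of the Beta integral under the integral sign at `u = 1`. -/
theorem hasDerivAt_integral_rpow_mul_one_sub_rpow {b : ℝ} (hb : 0 < b) :
    HasDerivAt (fun s : ℝ => ∫ x in Ioo (0 : ℝ) 1, x ^ (s - 1) * (1 - x) ^ (b - 1))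
      (∫ x in Ioo (0 : ℝ) 1, log x * (1 - x) ^ (b - 1)) 1 := by
  have key := (hasDerivAt_integral_of_dominated_loc_of_deriv_le
    (μ := volume.restrict (Ioo (0 : ℝ) 1)) (x₀ := (1 : ℝ)) (s := Ioi (1 / 2))
    (F := fun s x => x ^ (s - 1) * (1 - x) ^ (b - 1))
    (F' := fun s x => x ^ (s - 1) * log x * (1 - x) ^ (b - 1))
    (bound := fun x => 4 * (x ^ ((1 / 4 : ℝ) - 1) * (1 - x) ^ (b - 1)))
    (Ioi_mem_nhds (by norm_num))
    (.of_forall fun s => Measurable.aestronglyMeasurable (by fun_prop))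
    (integrableOn_rpow_mul_one_sub_rpow one_pos hb)
    (Measurable.aestronglyMeasurable (by fun_prop)) ?_
    ((integrableOn_rpow_mul_one_sub_rpow (by norm_num) hb).const_mul 4) ?_).2
  · simpa using key
  · refine ae_restrict_of_forall_mem measurableSet_Ioo fun x hx s hs => ?_
    have hx' : 0 ≤ (1 - x) ^ (b - 1) := rpow_nonneg (sub_nonneg.2 hx.2.le) _
    have hlog := abs_log_mul_self_rpow_lt x (1 / 4) hx.1 hx.2.le (by norm_num)
    have hs' : x ^ (s - 1) ≤ x ^ (1 / 4 : ℝ) * x ^ ((1 / 4 : ℝ) - 1) := by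
      rw [← rpow_add hx.1]
      exact rpow_le_rpow_of_exponent_ge hx.1 hx.2.le (by have : 1 / 2 < s := hs; linarith)
    rw [abs_mul, abs_of_nonneg (rpow_nonneg hx.1.le _)] at hlog
    rw [norm_mul, norm_mul, norm_of_nonneg hx', norm_of_nonneg (rpow_nonneg hx.1.le _),
      norm_eq_abs, ← mul_assoc]
    refine mul_le_mul_of_nonneg_right ?_ hx'
    calc x ^ (s - 1) * |log x| ≤ x ^ (1 / 4 : ℝ) * x ^ ((1 / 4 : ℝ) - 1) * |log x| := by gcongr
      _ = |log x| * x ^ (1 / 4 : ℝ) * x ^ ((1 / 4 : ℝ) - 1) := by ring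
      _ ≤ 4 * x ^ ((1 / 4 : ℝ) - 1) :=
        mul_le_mul_of_nonneg_right (by linarith) (rpow_nonneg hx.1.le _)
  · refine ae_restrict_of_forall_mem measurableSet_Ioo fun x hx s _ => ?_
    have h := ((hasDerivAt_id s).sub_const 1).const_rpow hx.1
    exact (by simpa [mul_comm] using h : HasDerivAt (fun s => x ^ (s - 1))
      (x ^ (s - 1) * log x) s).mul_const _

open Set MeasureTheory in
/-- The logarithmic moment of the Beta kernel with first parameter `1`. -/
theorem integral_log_mul_one_sub_rpow {b : ℝ} (hb : 0 < b) :
    ∫ x in Ioo (0 : ℝ) 1, log x * (1 - x) ^ (b - 1)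
      = -(1 / b) * (eulerMascheroniConstant + digamma b + 1 / b) := by
  have hΓ := (Gamma_pos_of_pos hb).ne'
  have hb1 : 0 < 1 + b := by positivity
  have hnum := (hasDerivAt_Gamma_digamma one_pos).mul_const (Gamma b)
  have hden : HasDerivAt (fun s => Gamma (s + b)) (Gamma (1 + b) * digamma (1 + b)) 1 :=
    (hasDerivAt_Gamma_digamma hb1).comp_add_const 1 b
  have hquot := (hnum.div hden (Gamma_pos_of_pos hb1).ne').congr_of_eventuallyEq
    (f₁ := fun s : ℝ => ∫ x in Ioo (0 : ℝ) 1, x ^ (s - 1) * (1 - x) ^ (b - 1)) (by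
      filter_upwards [Ioi_mem_nhds one_pos] with s hs using integral_rpow_mul_one_sub_rpow hs hb)
  rw [(hasDerivAt_integral_rpow_mul_one_sub_rpow hb).unique hquot, add_comm 1 b,
    digamma_add_one hb, digamma_one, Gamma_add_one hb.ne', Gamma_one]
  field_simp
  ring

/-- For positive `a`, the map `x ↦ x ^ a` sends the open unit interval onto itself. -/
theorem image_rpow_Ioo_zero_one {a : ℝ} (ha : 0 < a) :
    (fun x : ℝ => x ^ a) '' Set.Ioo 0 1 = Set.Ioo 0 1 := by
  ext y
  constructor
  · rintro ⟨x, hx, rfl⟩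
    exact ⟨rpow_pos_of_pos hx.1 a, rpow_lt_one hx.1.le hx.2 ha⟩
  · intro hy
    exact ⟨y ^ a⁻¹, ⟨rpow_pos_of_pos hy.1 _, rpow_lt_one hy.1.le hy.2 (inv_pos.2 ha)⟩,
      rpow_inv_rpow hy.1.le ha.ne'⟩

/-- The expectation of `log π` under the Kumaraswamy(a, b) distribution equals
`-(γ + ψ(b) + 1/b) / a`, where `γ` is the Euler–Mascheroni constant. -/
theorem kumaraswamy_expectation_log (a b : ℝ) (ha : 0 < a) (hb : 0 < b) :
    ∫ x in (0:ℝ)..1, Real.log x * (a * b * x ^ (a - 1) * (1 - x ^ a) ^ (b - 1))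
      = -(1/a) * (Real.eulerMascheroniConstant + digamma b + 1/b) := by
  have hsub := MeasureTheory.integral_image_eq_integral_abs_deriv_smul measurableSet_Ioo
    (fun x hx => (hasDerivAt_rpow_const (p := a) (Or.inl hx.1.ne')).hasDerivWithinAt)
    (fun x hx y hy h => (rpow_left_inj hx.1.le hy.1.le ha.ne').1 h)
    (fun y : ℝ => log y * (1 - y) ^ (b - 1)) (s := Set.Ioo (0 : ℝ) 1)
  rw [image_rpow_Ioo_zero_one ha, integral_log_mul_one_sub_rpow hb] at hsub
  rw [intervalIntegral.integral_of_le zero_le_one, MeasureTheory.integral_Ioc_eq_integral_Ioo]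
  calc _ = ∫ x in Set.Ioo (0 : ℝ) 1, b / a *
        (|a * x ^ (a - 1)| • (log (x ^ a) * (1 - x ^ a) ^ (b - 1))) := by
        refine MeasureTheory.setIntegral_congr_fun measurableSet_Ioo fun x hx => ?_
        have hpos : 0 ≤ a * x ^ (a - 1) := mul_nonneg ha.le (rpow_nonneg hx.1.le _)
        simp only [abs_of_nonneg hpos, log_rpow hx.1, smul_eq_mul]
        field_simp
    _ = _ := by
        rw [MeasureTheory.integral_const_mul, ← hsub]
        field_simp
end
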